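/- Let G be a basic piecewise ultrahomogeneous CUH graph in which both D and D̃ are realized. Then for every finite set U ⊆ R of red vertices and every maximal blue clique M_B, there exists a vertex b ∈ M_B adjacent to every vertex of U. -/

import Mathlib

open SimpleGraph

/-- A partial colored isomorphism of the 2-colored graph `(G, red)`, defined on the set `S`:
an injective map preserving colors and adjacency on `S`. -/
def IsPartialIso {V : Type} (G : SimpleGraph V) (red : V → Prop) (S : Set V) (f : V → V) :
    Prop :=
  Set.InjOn f S ∧ (∀ v ∈ S, (red (f v) ↔ red v)) ∧
    ∀ u ∈ S, ∀ v ∈ S, (G.Adj (f u) (f v) ↔ G.Adj u v)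

/-- A 2-colored graph is ultrahomogeneous if every isomorphism between two finite induced
colored subgraphs extends to a color-preserving automorphism. -/
def Ultrahomogeneous {V : Type} (G : SimpleGraph V) (red : V → Prop) : Prop :=
  ∀ S : Set V, S.Finite → ∀ f : V → V, IsPartialIso G red S f →
    ∃ ψ : G ≃g G, (∀ v, red (ψ v) ↔ red v) ∧ ∀ v ∈ S, ψ v = f v

/-- The set `P` induces a disjoint union of cliques in `G` (no induced monochromatic `P₃`). -/
def IsUnionOfCliques {V : Type} (G : SimpleGraph V) (P : Set V) : Prop :=
  ∀ u ∈ P, ∀ v ∈ P, ∀ w ∈ P, G.Adj u v → G.Adj v w → u ≠ w → G.Adj u w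

/-- `M` is an inclusion-wise maximal clique of the subgraph of `G` induced on `P`. -/
def IsMaxCliqueIn {V : Type} (G : SimpleGraph V) (P : Set V) (M : Set V) : Prop :=
  M ⊆ P ∧ G.IsClique M ∧ ∀ M' : Set V, M' ⊆ P → G.IsClique M' → M ⊆ M' → M = M'

/-- `S` is an independent set in `G`. -/
def IsIndepIn {V : Type} (G : SimpleGraph V) (S : Set V) : Prop :=
  ∀ u ∈ S, ∀ v ∈ S, ¬ G.Adj u v

/-- The 2-colored graph `(H, redH)` is realized in `(G, red)`, i.e. isomorphic to an
induced colored subgraph of `G`. -/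
def Realizes {V : Type} (G : SimpleGraph V) (red : V → Prop) {W : Type} (H : SimpleGraph W)
    (redH : W → Prop) : Prop :=
  ∃ f : W → V, Function.Injective f ∧ (∀ w, red (f w) ↔ redH w) ∧
    ∀ u w : W, G.Adj (f u) (f w) ↔ H.Adj u w

/-- `(H, redH)` is minimally omitted in `(G, red)`: it is omitted, but every proper induced
subgraph of it is realized. -/
def MinOmitted {V : Type} (G : SimpleGraph V) (red : V → Prop) {W : Type} (H : SimpleGraph W)
    (redH : W → Prop) : Prop :=
  ¬ Realizes G red H redH ∧
    ∀ S : Set W, S ≠ Set.univ → Realizes G red (H.induce S) (fun x => redH x.1)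

/-- Isomorphism of 2-colored graphs. -/
def ColoredIso {V : Type} (G : SimpleGraph V) (red : V → Prop) {W : Type} (H : SimpleGraph W)
    (redH : W → Prop) : Prop :=
  ∃ e : G ≃g H, ∀ v, red v ↔ redH (e v)

/-- The graph obtained from `G` by complementing the cross edges while keeping the
edges inside each color class. -/
def crossComp {V : Type} (G : SimpleGraph V) (red : V → Prop) : SimpleGraph V :=
  SimpleGraph.fromRel (fun u v =>
    ((red u ↔ red v) ∧ G.Adj u v) ∨ (¬ (red u ↔ red v) ∧ ¬ G.Adj u v))

/-- The blow-up of the 2-colored graph `(H, redH)` (whose red class should be independent),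
replacing every red vertex by a copy of `I` forming a clique, joined to the neighbors of the
original vertex. -/
def blowUp {V : Type} (H : SimpleGraph V) (redH : V → Prop) (I : Type) :
    SimpleGraph ({v : V // redH v} × I ⊕ {v : V // ¬ redH v}) :=
  SimpleGraph.fromRel (fun x y =>
    match x, y with
    | Sum.inl (u, i), Sum.inl (u', i') => H.Adj u.1 u'.1 ∨ (u = u' ∧ i ≠ i')
    | Sum.inl (u, _), Sum.inr b => H.Adj u.1 b.1
    | Sum.inr b, Sum.inl (u, _) => H.Adj b.1 u.1
    | Sum.inr b, Sum.inr b' => H.Adj b.1 b'.1)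

/-- The coloring of the blow-up: all vertices replacing red vertices are red. -/
def blowUpRed (V : Type) (redH : V → Prop) (I : Type) :
    ({v : V // redH v} × I ⊕ {v : V // ¬ redH v}) → Prop :=
  Sum.elim (fun _ => True) (fun _ => False)

/-- `(G, red)` is a blow-up with the red class blown up: it is isomorphic (as a colored graph)
to the blow-up of some `(H, redH)` with independent red class by an `i`-clique, `2 ≤ i ≤ ℵ₀`. -/
def IsBlowUpOf {V : Type} (G : SimpleGraph V) (red : V → Prop) : Prop :=
  ∃ (U : Type) (H : SimpleGraph U) (redH : U → Prop) (I : Type),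
    (∀ u v : U, redH u → redH v → ¬ H.Adj u v) ∧
    2 ≤ Cardinal.mk I ∧ Cardinal.mk I ≤ Cardinal.aleph0 ∧
    ∃ e : G ≃g blowUp H redH I, ∀ v, red v ↔ blowUpRed U redH I (e v)

/-- `(G, red)` is a blow-up (of one of its two color classes). -/
def IsBlowUp {V : Type} (G : SimpleGraph V) (red : V → Prop) : Prop :=
  IsBlowUpOf G red ∨ IsBlowUpOf G (fun v => ¬ red v)

/-- A CUH graph: a countably infinite ultrahomogeneous 2-colored graph in which both
color classes induce disjoint unions of cliques. -/
def IsCUH {V : Type} (G : SimpleGraph V) (red : V → Prop) : Prop :=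
  Countable V ∧ Infinite V ∧ Ultrahomogeneous G red ∧
    IsUnionOfCliques G {v | red v} ∧ IsUnionOfCliques G {v | ¬ red v}

/-- A basic CUH graph: a CUH graph which is not a blow-up and where both independence
numbers are at least 2. -/
def IsBasicCUH {V : Type} (G : SimpleGraph V) (red : V → Prop) : Prop :=
  IsCUH G red ∧ ¬ IsBlowUp G red ∧
    (∃ u v, red u ∧ red v ∧ u ≠ v ∧ ¬ G.Adj u v) ∧
    (∃ u v, ¬ red u ∧ ¬ red v ∧ u ≠ v ∧ ¬ G.Adj u v)

/-- The graph `D`: red vertices `0, 1`, blue vertices `2, 3`, edges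
`{01, 23, 02, 03, 12}` (a 2-colored diamond). -/
def Dgraph : SimpleGraph (Fin 4) :=
  SimpleGraph.fromRel (fun x y =>
    (x = 0 ∧ y = 1) ∨ (x = 2 ∧ y = 3) ∨ (x = 0 ∧ y = 2) ∨ (x = 0 ∧ y = 3) ∨ (x = 1 ∧ y = 2))

/-- The coloring of `D` and `D̃`: `0, 1` are red, `2, 3` are blue. -/
def Dred : Fin 4 → Prop := fun x => x = 0 ∨ x = 1

/-- The graph `D̃`, the cross-edge complement of `D`: the path `0 – 1 – 3 – 2`. -/
def Dtilde : SimpleGraph (Fin 4) :=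
  SimpleGraph.fromRel (fun x y => (x = 0 ∧ y = 1) ∨ (x = 1 ∧ y = 3) ∨ (x = 3 ∧ y = 2))

/-- `T_r`: the triangle with two red vertices and one blue vertex. -/
def Tr : SimpleGraph (Fin 3) := ⊤

/-- The coloring of `T_r` and `T̃_r`: `0, 1` red, `2` blue. -/
def TrRed : Fin 3 → Prop := fun x => x = 0 ∨ x = 1

/-- `T̃_r`: a red edge together with an isolated blue vertex. -/
def TrTilde : SimpleGraph (Fin 3) := SimpleGraph.fromRel (fun x y => x = 0 ∧ y = 1)

/-- `T_b`: the triangle with one red vertex and two blue vertices. -/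
def Tb : SimpleGraph (Fin 3) := ⊤

/-- The coloring of `T_b` and `T̃_b`: `0` red, `1, 2` blue. -/
def TbRed : Fin 3 → Prop := fun x => x = 0

/-- `T̃_b`: a blue edge together with an isolated red vertex. -/
def TbTilde : SimpleGraph (Fin 3) := SimpleGraph.fromRel (fun x y => x = 1 ∧ y = 2)

/-!
Let `X` be a maximal red and `Y` a maximal blue clique. Inside a color class of `X ∪ Y` every
injection between finite sets is a partial isomorphism, so it extends to an automorphism of the
piece. As `D` and `D̃` contain both a cross edge and a cross non-edge, they are realized in
`X ∪ Y` as soon as they are realized in `G`; hence every `b ∈ Y` has two neighbors and two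
non-neighbors in `X`. If its neighborhood were finite, exchanging one, respectively two, of its
elements for non-neighbors would give blue vertices `c₁` and `c₂` such that an automorphism maps
`(b, c₁)` to `(b, c₂)`, although `c₁` misses one and `c₂` misses two neighbors of `b`. Therefore
neighborhoods and non-neighborhoods are infinite, so every finite adjacency pattern to a subset of
`X` is realized by some vertex of `Y`. Comparing a pair `b ≠ c` in `Y` with suitable pairs `b ≠ d`,
all four adjacency types over `b, c` are infinite in `X`.

Given `U`, fix such `b, c`, and move every `u ∈ U` within its red clique to a vertex with the same
adjacency to `b` and the desired adjacency to `c`. Together with `b ↦ b` this is a partial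
isomorphism; an automorphism extending it carries the required vertex to `c`.
-/

/-- Each color class is a clique, as in the union of one red and one blue clique. -/
def HasCompleteColors {V : Type} (G : SimpleGraph V) (red : V → Prop) : Prop :=
  ∀ u v, (red u ↔ red v) → u ≠ v → G.Adj u v

/-- The red neighbors of `b` if `p` holds, and the red non-neighbors of `b` otherwise. The
parameter `p` lets one argument serve for a graph and for its cross-edge complement. -/
def redLink {V : Type} (G : SimpleGraph V) (red : V → Prop) (b : V) (p : Prop) : Set V :=
  {x | red x ∧ (G.Adj b x ↔ p)}

/-- The clique of `u` in the subgraph induced on `P`, when that subgraph is a disjoint union of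
cliques. -/
def cliqueOf {V : Type} (G : SimpleGraph V) (P : Set V) (u : V) : Set V :=
  {v ∈ P | v = u ∨ G.Adj v u}

theorem exists_injective_forall_mem_of_infinite {ι α : Type*} [Finite ι] {T : ι → Set α}
    (hT : ∀ i, (T i).Infinite) : ∃ f : ι → α, Function.Injective f ∧ ∀ i, f i ∈ T i := by
  classical
  have := Fintype.ofFinite ι
  choose t htT htcard using fun i => (hT i).exists_subset_card_eq (Fintype.card ι)
  obtain ⟨f, hf, hft⟩ := (Finset.all_card_le_biUnion_card_iff_exists_injective t).1 fun s => by
    obtain rfl | ⟨i, hi⟩ := s.eq_empty_or_nonempty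
    · simp
    · calc s.card ≤ Fintype.card ι := s.card_le_univ
        _ = (t i).card := (htcard i).symm
        _ ≤ (s.biUnion t).card := Finset.card_le_card (Finset.subset_biUnion_of_mem t hi)
  exact ⟨f, hf, fun i => htT i (hft i)⟩

section Cliques

variable {V : Type} {G : SimpleGraph V} {P M : Set V}

theorem IsUnionOfCliques.eq_or_adj_trans (hP : IsUnionOfCliques G P) {u v w : V} (hu : u ∈ P)
    (hv : v ∈ P) (hw : w ∈ P) (huv : u = v ∨ G.Adj u v) (hvw : v = w ∨ G.Adj v w) :
    u = w ∨ G.Adj u w := by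
  obtain rfl | huv := huv
  · exact hvw
  obtain rfl | hvw := hvw
  · exact Or.inr huv
  exact or_iff_not_imp_left.2 (hP u hu v hv w hw huv hvw)

theorem IsMaxCliqueIn.nonempty (hM : IsMaxCliqueIn G P M) (hP : P.Nonempty) : M.Nonempty := by
  obtain ⟨p, hp⟩ := hP
  by_contra! hempty
  have hM_eq := hM.2.2 {p} (Set.singleton_subset_iff.2 hp) (by simp) (by simp [hempty])
  exact Set.singleton_ne_empty p (hM_eq.symm.trans hempty)

theorem IsMaxCliqueIn.mem_of_adj (hP : IsUnionOfCliques G P) (hM : IsMaxCliqueIn G P M)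
    {u v : V} (hu : u ∈ M) (hv : v ∈ P) (huv : G.Adj u v) : v ∈ M := by
  have hclique : G.IsClique (insert v M) := by
    refine SimpleGraph.isClique_insert.2 ⟨hM.2.1, fun w hw hvw => ?_⟩
    have huw : u = w ∨ G.Adj u w := or_iff_not_imp_left.2 (hM.2.1 hu hw)
    exact (hP.eq_or_adj_trans hv (hM.1 hu) (hM.1 hw) (.inr huv.symm) huw).resolve_left hvw
  rw [hM.2.2 _ (Set.insert_subset hv hM.1) hclique (Set.subset_insert v M)]
  exact Set.mem_insert v M

theorem isMaxCliqueIn_cliqueOf (hP : IsUnionOfCliques G P) {u : V} (hu : u ∈ P) :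
    IsMaxCliqueIn G P (cliqueOf G P u) := by
  refine ⟨fun v hv => hv.1, ?_, fun M' hM' hclique hsub => hsub.antisymm fun v hv => ⟨hM' hv, ?_⟩⟩
  · rintro v ⟨hv, hvu⟩ w ⟨hw, hwu⟩ hvw
    have huw : u = w ∨ G.Adj u w := hwu.imp Eq.symm Adj.symm
    exact (hP.eq_or_adj_trans hv hu hw hvu huw).resolve_left hvw
  · exact or_iff_not_imp_left.2 (hclique hv (hsub ⟨hu, Or.inl rfl⟩))

theorem adj_iff_of_mem_cliqueOf (hP : IsUnionOfCliques G P) {u v u' v' : V} (hu : u ∈ P)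
    (hv : v ∈ P) (hu' : u' ∈ cliqueOf G P u) (hv' : v' ∈ cliqueOf G P v)
    (heq : u' = v' ↔ u = v) : G.Adj u' v' ↔ G.Adj u v := by
  obtain ⟨hu'P, huu'⟩ := hu'
  obtain ⟨hv'P, hvv'⟩ := hv'
  have huu'_symm := huu'.imp Eq.symm Adj.symm
  have hvv'_symm := hvv'.imp Eq.symm Adj.symm
  constructor
  · intro hadj
    have huv' := hP.eq_or_adj_trans hu hu'P hv'P huu'_symm (.inr hadj)
    exact (hP.eq_or_adj_trans hu hv'P hv huv' hvv').resolve_left fun e => hadj.ne (heq.2 e)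
  · intro hadj
    have hu'v := hP.eq_or_adj_trans hu'P hu hv huu' (.inr hadj)
    exact (hP.eq_or_adj_trans hu'P hv hv'P hu'v hvv'_symm).resolve_left
      fun e => hadj.ne (heq.1 e)

end Cliques

section Pieces

variable {V : Type} {G : SimpleGraph V} {red : V → Prop}

theorem Ultrahomogeneous.exists_iso_of_tuple (hU : Ultrahomogeneous G red) {ι : Type*} [Finite ι]
    {a b : ι → V} (heq : ∀ i j, b i = b j ↔ a i = a j) (hred : ∀ i, red (b i) ↔ red (a i))
    (hadj : ∀ i j, G.Adj (b i) (b j) ↔ G.Adj (a i) (a j)) :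
    ∃ ψ : G ≃g G, (∀ v, red (ψ v) ↔ red v) ∧ ∀ i, ψ (a i) = b i := by
  have hext : ∀ i, Function.extend a b id (a i) = b i :=
    Function.FactorsThrough.extend_apply (fun i j e => (heq i j).2 e) id
  obtain ⟨ψ, hψred, hψ⟩ := hU (Set.range a) (Set.finite_range a) (Function.extend a b id) <| by
    refine ⟨?_, ?_, ?_⟩
    · rintro _ ⟨i, rfl⟩ _ ⟨j, rfl⟩ e
      rwa [hext, hext, heq] at e
    · rintro _ ⟨i, rfl⟩
      rw [hext, hred]
    · rintro _ ⟨i, rfl⟩ _ ⟨j, rfl⟩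
      rw [hext, hext, hadj]
  exact ⟨ψ, hψred, fun i => (hψ _ ⟨i, rfl⟩).trans (hext i)⟩

theorem Ultrahomogeneous.exists_iso_of_pair (hU : Ultrahomogeneous G red) {u v u' v' : V}
    (heq : u' = v' ↔ u = v) (hu : red u' ↔ red u) (hv : red v' ↔ red v)
    (hadj : G.Adj u' v' ↔ G.Adj u v) :
    ∃ ψ : G ≃g G, (∀ w, red (ψ w) ↔ red w) ∧ ψ u = u' ∧ ψ v = v' := by
  obtain ⟨ψ, hψred, hψ⟩ := hU.exists_iso_of_tuple (a := ![u, v]) (b := ![u', v'])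
    (by simp [Fin.forall_fin_two, heq, eq_comm (a := v'), eq_comm (a := v)])
    (by simp [Fin.forall_fin_two, hu, hv])
    (by simp [Fin.forall_fin_two, hadj, G.adj_comm v' u', G.adj_comm v u])
  exact ⟨ψ, hψred, hψ 0, hψ 1⟩

theorem image_redLink (ψ : G ≃g G) (hψ : ∀ v, red (ψ v) ↔ red v) (b : V) (p : Prop) :
    ψ '' redLink G red b p = redLink G red (ψ b) p := by
  ext x
  obtain ⟨x, rfl⟩ := ψ.surjective x
  simp only [ψ.injective.mem_set_image, redLink, Set.mem_ofPred_eq, hψ, ψ.map_adj_iff]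

theorem mem_redLink_not {b x : V} {p : Prop} :
    x ∈ redLink G red b (¬ p) ↔ red x ∧ x ∉ redLink G red b p := by
  simp only [redLink, Set.mem_ofPred_eq]
  tauto

theorem HasCompleteColors.adj_iff_ne (hK : HasCompleteColors G red) {u v : V}
    (huv : red u ↔ red v) : G.Adj u v ↔ u ≠ v :=
  ⟨Adj.ne, hK u v huv⟩

theorem Ultrahomogeneous.exists_iso_of_monochromatic (hU : Ultrahomogeneous G red)
    (hK : HasCompleteColors G red) {ι : Type*} [Finite ι] {a b : ι → V}
    (ha : Function.Injective a) (hb : Function.Injective b) (hred : ∀ i j, red (b i) ↔ red (a j)) :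
    ∃ ψ : G ≃g G, (∀ v, red (ψ v) ↔ red v) ∧ ∀ i, ψ (a i) = b i := by
  refine hU.exists_iso_of_tuple (fun i j => by rw [ha.eq_iff, hb.eq_iff]) (fun i => hred i i)
    fun i j => ?_
  rw [hK.adj_iff_ne ((hred i i).trans (hred j i).symm),
    hK.adj_iff_ne ((hred i i).symm.trans (hred i j)), ha.ne_iff, hb.ne_iff]

theorem Ultrahomogeneous.encard_redLink_inter (hU : Ultrahomogeneous G red)
    (hK : HasCompleteColors G red) {b c b' c' : V} (hb : ¬ red b) (hc : ¬ red c) (hb' : ¬ red b')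
    (hc' : ¬ red c') (heq : b' = c' ↔ b = c) (p q : Prop) :
    (redLink G red b p ∩ redLink G red c q).encard =
      (redLink G red b' p ∩ redLink G red c' q).encard := by
  obtain ⟨ψ, hψred, rfl, rfl⟩ := hU.exists_iso_of_pair heq (iff_of_false hb' hb)
    (iff_of_false hc' hc) (by
      rw [hK.adj_iff_ne (iff_of_false hb' hc'), hK.adj_iff_ne (iff_of_false hb hc), Ne, heq])
  rw [← image_redLink ψ hψred, ← image_redLink ψ hψred, ← Set.image_inter ψ.injective,
    ψ.injective.encard_image]

theorem Ultrahomogeneous.encard_redLink (hU : Ultrahomogeneous G red)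
    (hK : HasCompleteColors G red) {b b' : V} (hb : ¬ red b) (hb' : ¬ red b') (p : Prop) :
    (redLink G red b p).encard = (redLink G red b' p).encard := by
  simpa only [Set.inter_self] using hU.encard_redLink_inter hK hb hb hb' hb' (by simp) p p

theorem Ultrahomogeneous.exists_redLink_eq (hU : Ultrahomogeneous G red)
    (hK : HasCompleteColors G red) {b : V} (hb : ¬ red b) {p : Prop}
    (hfin : (redLink G red b p).Finite) {A : Set V} (hA : ∀ x ∈ A, red x)
    (hcard : A.encard = (redLink G red b p).encard) :
    ∃ c, ¬ red c ∧ redLink G red c p = A := by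
  have := hfin.to_subtype
  have : Nonempty V := ⟨b⟩
  obtain ⟨f, hf⟩ := hfin.exists_bijOn_of_encard_eq hcard.symm
  obtain ⟨ψ, hψred, hψ⟩ := hU.exists_iso_of_monochromatic hK Subtype.val_injective
    hf.injOn.injective fun x y => iff_of_true (hA _ (hf.mapsTo x.2)) y.2.1
  refine ⟨ψ b, (hψred b).not.2 hb, ?_⟩
  calc redLink G red (ψ b) p = ψ '' redLink G red b p := (image_redLink ψ hψred b p).symm
    _ = f '' redLink G red b p := Set.image_congr fun x hx => hψ ⟨x, hx⟩
    _ = A := hf.image_eq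

theorem Ultrahomogeneous.exists_redLink_inter_not_eq (hU : Ultrahomogeneous G red)
    (hK : HasCompleteColors G red) {b : V} (hb : ¬ red b) {p : Prop}
    (hfin : (redLink G red b p).Finite) {S T : Set V} (hS : S ⊆ redLink G red b p)
    (hT : T ⊆ redLink G red b (¬ p)) (hST : S.encard = T.encard) :
    ∃ c, ¬ red c ∧ redLink G red b p ∩ redLink G red c (¬ p) = S := by
  have hdisj : Disjoint (redLink G red b p) T :=
    Set.disjoint_left.2 fun x hx hxT => (mem_redLink_not.1 (hT hxT)).2 hx
  obtain ⟨c, hc, hcL⟩ := hU.exists_redLink_eq hK hb hfin (A := redLink G red b p \ S ∪ T)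
    (by
      rintro x (hx | hx)
      exacts [hx.1.1, (hT hx).1])
    (by
      rw [Set.encard_union_eq (hdisj.mono_left Set.sdiff_subset), ← hST,
        Set.encard_sdiff_add_encard_of_subset hS])
  refine ⟨c, hc, Set.ext fun x => ?_⟩
  rw [Set.mem_inter_iff, mem_redLink_not, hcL]
  refine ⟨fun ⟨hx, _, hxc⟩ => ?_, fun hx => ⟨hS hx, (hS hx).1, ?_⟩⟩
  · by_contra hxS
    exact hxc (Or.inl ⟨hx, hxS⟩)
  · rintro (hxS | hxT)
    exacts [hxS.2 hx, hdisj.notMem_of_mem_left (hS hx) hxT]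

theorem Ultrahomogeneous.infinite_redLink (hU : Ultrahomogeneous G red)
    (hK : HasCompleteColors G red) {b : V} (hb : ¬ red b) {p : Prop}
    (hp : (redLink G red b p).Nontrivial) (hnp : (redLink G red b (¬ p)).Nontrivial) :
    (redLink G red b p).Infinite := by
  intro hfin
  obtain ⟨s₁, hs₁, s₂, hs₂, hs⟩ := hp
  obtain ⟨t₁, ht₁, t₂, ht₂, ht⟩ := hnp
  obtain ⟨c₁, hc₁, hbc₁⟩ := hU.exists_redLink_inter_not_eq hK hb hfin (S := {s₁}) (T := {t₁})
    (by simpa) (by simpa) (by simp)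
  obtain ⟨c₂, hc₂, hbc₂⟩ := hU.exists_redLink_inter_not_eq hK hb hfin (S := {s₁, s₂})
    (T := {t₁, t₂}) (Set.pair_subset hs₁ hs₂) (Set.pair_subset ht₁ ht₂)
    (by rw [Set.encard_pair hs, Set.encard_pair ht])
  have hne : ∀ {c : V}, s₁ ∈ redLink G red b p ∩ redLink G red c (¬ p) → b ≠ c := by
    rintro _ hs₁c rfl
    exact (mem_redLink_not.1 hs₁c.2).2 hs₁c.1
  have hcard := hU.encard_redLink_inter hK hb hc₁ hb hc₂
    (iff_of_false (hne (by simp [hbc₂])) (hne (by simp [hbc₁]))) p (¬ p)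
  rw [hbc₁, hbc₂, Set.encard_singleton, Set.encard_pair hs] at hcard
  exact absurd hcard (by norm_num)

theorem Ultrahomogeneous.exists_blue_adj_iff (hU : Ultrahomogeneous G red)
    (hK : HasCompleteColors G red) {b : V} (hb : ¬ red b)
    (hinf : ∀ p, (redLink G red b p).Infinite) {A : Set V} (hfin : A.Finite)
    (hA : ∀ x ∈ A, red x) (P : V → Prop) :
    ∃ d, ¬ red d ∧ ∀ x ∈ A, (G.Adj d x ↔ P x) := by
  have := hfin.to_subtype
  obtain ⟨f, hf, hfL⟩ := exists_injective_forall_mem_of_infinite fun x : A => hinf (P x)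
  obtain ⟨ψ, hψred, hψ⟩ := hU.exists_iso_of_monochromatic hK Subtype.val_injective hf
    fun x y => iff_of_true (hfL x).1 (hA y y.2)
  obtain ⟨d, rfl⟩ := ψ.surjective b
  refine ⟨d, (hψred d).not.1 hb, fun x hx => ?_⟩
  rw [← ψ.map_adj_iff, hψ ⟨x, hx⟩]
  exact (hfL ⟨x, hx⟩).2

theorem Ultrahomogeneous.infinite_redLink_inter (hU : Ultrahomogeneous G red)
    (hK : HasCompleteColors G red) {b c : V} (hb : ¬ red b) (hc : ¬ red c) (hbc : b ≠ c)
    (hinf : ∀ p, (redLink G red b p).Infinite) (p q : Prop) :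
    (redLink G red b p ∩ redLink G red c q).Infinite := by
  classical
  intro hfin
  obtain ⟨n, hn⟩ := hfin.exists_encard_eq_coe
  obtain ⟨A, hA, hAcard⟩ := (hinf p).exists_subset_card_eq (n + 1)
  obtain ⟨x, hx⟩ := (hinf (¬ p)).nonempty
  have hxA : x ∉ A := fun h => (mem_redLink_not.1 hx).2 (hA h)
  obtain ⟨d, hd, hdadj⟩ := hU.exists_blue_adj_iff hK hb hinf (insert x A).finite_toSet
    (by simpa using ⟨hx.1, fun a ha => (hA ha).1⟩) fun a => if a ∈ A then q else p
  have hbd : b ≠ d := by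
    rintro rfl
    have hdx := hdadj x (by simp)
    rw [if_neg hxA, hx.2] at hdx
    exact not_iff_self hdx
  have hAd : ↑A ⊆ redLink G red b p ∩ redLink G red d q := by
    intro a ha
    have hda := hdadj a (Finset.mem_insert_of_mem ha)
    rw [if_pos (Finset.mem_coe.1 ha)] at hda
    exact ⟨hA ha, (hA ha).1, hda⟩
  have hle := Set.encard_le_encard hAd
  rw [hU.encard_redLink_inter hK hb hd hb hc (iff_of_false hbc hbd), hn,
    Set.encard_coe_eq_coe_finsetCard, hAcard, Nat.cast_le] at hle
  omega

theorem Realizes.nontrivial_redLink (hU : Ultrahomogeneous G red) (hK : HasCompleteColors G red)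
    {W : Type} {H : SimpleGraph W} {redH : W → Prop} (hH : Realizes G red H redH) {w : W}
    (hw : ¬ redH w) {p : Prop} (hL : (redLink H redH w p).Nontrivial) {b : V} (hb : ¬ red b) :
    (redLink G red b p).Nontrivial := by
  obtain ⟨f, hf, hred, hadj⟩ := hH
  have hfL : f '' redLink H redH w p ⊆ redLink G red (f w) p := by
    rintro _ ⟨x, hx, rfl⟩
    exact ⟨(hred x).2 hx.1, (hadj w x).trans hx.2⟩
  rw [← Set.one_lt_encard_iff_nontrivial, hU.encard_redLink hK hb ((hred w).not.2 hw),
    Set.one_lt_encard_iff_nontrivial]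
  exact (hL.image hf).mono hfL

end Pieces

section CliquePairs

variable {V : Type} {G : SimpleGraph V} {red : V → Prop} {X Y : Set V}

theorem hasCompleteColors_induce_union (hX : IsMaxCliqueIn G {v | red v} X)
    (hY : IsMaxCliqueIn G {v | ¬ red v} Y) :
    HasCompleteColors (G.induce (X ∪ Y)) (fun x => red x.1) := by
  rintro ⟨u, hu⟩ ⟨v, hv⟩ (huv : red u ↔ red v) hne
  have hne' : u ≠ v := fun e => hne (Subtype.ext e)
  rcases hu with hu | hu <;> rcases hv with hv | hv
  · exact hX.2.1 hu hv hne'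
  · exact absurd (huv.1 (hX.1 hu)) (hY.1 hv)
  · exact absurd (huv.2 (hX.1 hv)) (hY.1 hu)
  · exact hY.2.1 hu hv hne'

theorem Realizes.induce_union (hU : Ultrahomogeneous G red)
    (hR : IsUnionOfCliques G {v | red v}) (hB : IsUnionOfCliques G {v | ¬ red v})
    (hX : IsMaxCliqueIn G {v | red v} X) (hY : IsMaxCliqueIn G {v | ¬ red v} Y) {W : Type}
    {H : SimpleGraph W} {redH : W → Prop} (hH : Realizes G red H redH)
    (hK : HasCompleteColors H redH)
    (hcross : ∀ p : Prop, ∃ b, ¬ redH b ∧ (redLink H redH b p).Nonempty) :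
    Realizes (G.induce (X ∪ Y)) (fun x => red x.1) H redH := by
  obtain ⟨f, hf, hred, hadj⟩ := hH
  obtain ⟨b₀, hb₀, r₀, hr₀, -⟩ := hcross True
  obtain ⟨x, hx⟩ := hX.nonempty ⟨f r₀, (hred r₀).2 hr₀⟩
  obtain ⟨y, hy⟩ := hY.nonempty ⟨f b₀, (hred b₀).not.2 hb₀⟩
  obtain ⟨b, hb, r, hr, hbr⟩ := hcross (G.Adj y x)
  have hyx : y ≠ x := fun e => hY.1 hy (e ▸ hX.1 hx)
  have hbr_ne : b ≠ r := fun e => hb (e ▸ hr)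
  obtain ⟨ψ, hψred, hψb, hψr⟩ := hU.exists_iso_of_pair (u := f b) (v := f r) (u' := y) (v' := x)
    (iff_of_false hyx (hf.ne hbr_ne)) (iff_of_false (hY.1 hy) ((hred b).not.2 hb))
    (iff_of_true (hX.1 hx) ((hred r).2 hr)) ((hadj b r).trans hbr).symm
  have hmem : ∀ w, ψ (f w) ∈ X ∪ Y := by
    intro w
    by_cases hw : redH w
    · obtain rfl | hne := eq_or_ne r w
      · exact Or.inl (hψr ▸ hx)
      · refine Or.inl (hX.mem_of_adj hR hx ((hψred _).2 ((hred w).2 hw)) ?_)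
        rw [← hψr, ψ.map_adj_iff, hadj]
        exact hK r w (iff_of_true hr hw) hne
    · obtain rfl | hne := eq_or_ne b w
      · exact Or.inr (hψb ▸ hy)
      · refine Or.inr (hY.mem_of_adj hB hy (((hψred _).trans (hred w)).not.2 hw) ?_)
        rw [← hψb, ψ.map_adj_iff, hadj]
        exact hK b w (iff_of_false hb hw) hne
  exact ⟨fun w => ⟨ψ (f w), hmem w⟩,
    fun u v e => hf (ψ.injective (congrArg Subtype.val e)),
    fun w => (hψred _).trans (hred w), fun u w => ψ.map_adj_iff.trans (hadj u w)⟩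

theorem hasCompleteColors_Dgraph : HasCompleteColors Dgraph Dred := by
  simp [HasCompleteColors, Fin.forall_fin_succ, Dgraph, Dred]

theorem hasCompleteColors_Dtilde : HasCompleteColors Dtilde Dred := by
  simp [HasCompleteColors, Fin.forall_fin_succ, Dtilde, Dred]

theorem exists_nonempty_redLink_Dgraph (p : Prop) :
    ∃ b, ¬ Dred b ∧ (redLink Dgraph Dred b p).Nonempty := by
  refine ⟨3, by simp [Dred], ?_⟩
  by_cases hp : p
  · exact ⟨0, by simp [redLink, Dgraph, Dred, hp]⟩
  · exact ⟨1, by simp [redLink, Dgraph, Dred, hp]⟩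

theorem exists_nonempty_redLink_Dtilde (p : Prop) :
    ∃ b, ¬ Dred b ∧ (redLink Dtilde Dred b p).Nonempty := by
  refine ⟨3, by simp [Dred], ?_⟩
  by_cases hp : p
  · exact ⟨1, by simp [redLink, Dtilde, Dred, hp]⟩
  · exact ⟨0, by simp [redLink, Dtilde, Dred, hp]⟩

theorem nontrivial_redLink_Dgraph : (redLink Dgraph Dred 2 True).Nontrivial :=
  ⟨0, by simp [redLink, Dgraph, Dred], 1, by simp [redLink, Dgraph, Dred], by simp⟩

theorem nontrivial_redLink_Dtilde : (redLink Dtilde Dred 2 False).Nontrivial :=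
  ⟨0, by simp [redLink, Dtilde, Dred], 1, by simp [redLink, Dtilde, Dred], by simp⟩

theorem infinite_redLink_of_realizes (hU : Ultrahomogeneous G red) (hK : HasCompleteColors G red)
    (hD : Realizes G red Dgraph Dred) (hDt : Realizes G red Dtilde Dred) {b : V} (hb : ¬ red b)
    (p : Prop) : (redLink G red b p).Infinite := by
  have hadj := hD.nontrivial_redLink hU hK (by simp [Dred]) nontrivial_redLink_Dgraph hb
  have hnadj := hDt.nontrivial_redLink hU hK (by simp [Dred]) nontrivial_redLink_Dtilde hb
  by_cases hp : p
  · rw [eq_true hp]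
    exact hU.infinite_redLink hK hb hadj (by rwa [not_true])
  · rw [eq_false hp]
    exact hU.infinite_redLink hK hb hnadj (by rwa [not_false_iff])

theorem infinite_setOf_mem_maxClique_adj_iff (hU : Ultrahomogeneous G red)
    (hR : IsUnionOfCliques G {v | red v}) (hB : IsUnionOfCliques G {v | ¬ red v})
    (hD : Realizes G red Dgraph Dred) (hDt : Realizes G red Dtilde Dred)
    (hX : IsMaxCliqueIn G {v | red v} X) (hY : IsMaxCliqueIn G {v | ¬ red v} Y)
    (hXY : Ultrahomogeneous (G.induce (X ∪ Y)) (fun x => red x.1))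
    {b c : V} (hb : b ∈ Y) (hc : c ∈ Y) (hbc : b ≠ c) (p q : Prop) :
    {x ∈ X | (G.Adj b x ↔ p) ∧ (G.Adj c x ↔ q)}.Infinite := by
  have hK := hasCompleteColors_induce_union hX hY
  have hD' := hD.induce_union hU hR hB hX hY hasCompleteColors_Dgraph
    exists_nonempty_redLink_Dgraph
  have hDt' := hDt.induce_union hU hR hB hX hY hasCompleteColors_Dtilde
    exists_nonempty_redLink_Dtilde
  have hinf := hXY.infinite_redLink_inter hK (b := ⟨b, Or.inr hb⟩) (c := ⟨c, Or.inr hc⟩)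
    (hY.1 hb) (hY.1 hc) (fun e => hbc (congrArg Subtype.val e))
    (infinite_redLink_of_realizes hXY hK hD' hDt' (hY.1 hb)) p q
  refine (hinf.image Subtype.val_injective.injOn).mono ?_
  rintro _ ⟨x, ⟨⟨hxred, hbx⟩, -, hcx⟩, rfl⟩
  exact ⟨x.2.resolve_right fun hxY => hY.1 hxY hxred, hbx, hcx⟩

theorem IsMaxCliqueIn.nontrivial_of_adj (hU : Ultrahomogeneous G red)
    (hB : IsUnionOfCliques G {v | ¬ red v}) (hY : IsMaxCliqueIn G {v | ¬ red v} Y) {b c : V}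
    (hb : ¬ red b) (hc : ¬ red c) (hbc : G.Adj b c) : Y.Nontrivial := by
  obtain ⟨y, hy⟩ := hY.nonempty ⟨b, hb⟩
  obtain ⟨ψ, hψred, rfl, -⟩ := hU.exists_iso_of_pair (u := b) (v := b) (u' := y) (v' := y)
    (by simp) (iff_of_false (hY.1 hy) hb) (iff_of_false (hY.1 hy) hb) (by simp)
  have hψbc := ψ.map_adj_iff.2 hbc
  exact ⟨ψ b, hy, ψ c, hY.mem_of_adj hB hy ((hψred c).not.2 hc) hψbc, hψbc.ne⟩

theorem Ultrahomogeneous.exists_adj_blue_forall_adj_iff (hU : Ultrahomogeneous G red)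
    (hR : IsUnionOfCliques G {v | red v}) {b c : V} (hb : ¬ red b) (hc : ¬ red c)
    (hbc : G.Adj b c) {U : Finset V} (hUred : ∀ u ∈ U, red u) (P : V → Prop)
    (hinf : ∀ u ∈ U,
      {x ∈ cliqueOf G {v | red v} u | (G.Adj b x ↔ G.Adj b u) ∧ (G.Adj c x ↔ P u)}.Infinite) :
    ∃ d, ¬ red d ∧ G.Adj b d ∧ ∀ u ∈ U, (G.Adj d u ↔ P u) := by
  obtain ⟨f, hf, hfT⟩ := exists_injective_forall_mem_of_infinite fun u : U => hinf u u.2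
  choose hfclique hfb hfc using hfT
  have hne : ∀ {r}, red r → b ≠ r := fun hr e => hb (e ▸ hr)
  have hfred : ∀ u, red (f u) := fun u => (hfclique u).1
  have hured : ∀ u : U, red u := fun u => hUred u u.2
  obtain ⟨ψ, hψred, hψ⟩ := hU.exists_iso_of_tuple (ι := Option U)
    (a := fun o => o.elim b Subtype.val) (b := fun o => o.elim b f)
    (by
      rintro (_ | u) (_ | v)
      · simp
      · exact iff_of_false (hne (hfred v)) (hne (hured v))
      · exact iff_of_false (hne (hfred u)).symm (hne (hured u)).symm
      · exact hf.eq_iff.trans Subtype.ext_iff)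
    (by
      rintro (_ | u)
      exacts [Iff.rfl, iff_of_true (hfred u) (hured u)])
    (by
      rintro (_ | u) (_ | v)
      · simp
      · exact hfb v
      · exact (G.adj_comm _ _).trans ((hfb u).trans (G.adj_comm _ _))
      · exact adj_iff_of_mem_cliqueOf hR (hured u) (hured v) (hfclique u) (hfclique v)
          (hf.eq_iff.trans Subtype.ext_iff))
  have hψb : ψ b = b := hψ none
  obtain ⟨d, rfl⟩ := ψ.surjective c
  refine ⟨d, (hψred d).not.1 hc, ?_, fun u hu => ?_⟩
  · rwa [← ψ.map_adj_iff, hψb]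
  · rw [← ψ.map_adj_iff, show ψ u = f ⟨u, hu⟩ from hψ (some ⟨u, hu⟩)]
    exact hfc ⟨u, hu⟩

end CliquePairs

theorem stmt_18_general {V : Type} (G : SimpleGraph V) (red : V → Prop)
    (hU : Ultrahomogeneous G red) (hR : IsUnionOfCliques G {v | red v})
    (hB : IsUnionOfCliques G {v | ¬ red v}) (hD : Realizes G red Dgraph Dred)
    (hDt : Realizes G red Dtilde Dred) (MB : Set V) (hMB : IsMaxCliqueIn G {v | ¬ red v} MB)
    (hpw : ∀ MR : Set V, IsMaxCliqueIn G {v | red v} MR →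
      Ultrahomogeneous (G.induce (MR ∪ MB)) (fun x => red x.1))
    (U : Finset V) (hUred : ∀ v ∈ U, red v) (P : V → Prop) :
    ∃ b ∈ MB, ∀ u ∈ U, (G.Adj b u ↔ P u) := by
  obtain ⟨b, hb, c, hc, hbc⟩ : MB.Nontrivial := by
    obtain ⟨f, -, hred, hadj⟩ := hD
    exact hMB.nontrivial_of_adj hU hB (b := f 2) (c := f 3) (by simp [hred, Dred])
      (by simp [hred, Dred]) (by simp [hadj, Dgraph])
  obtain ⟨d, hd, hbd, hdU⟩ := hU.exists_adj_blue_forall_adj_iff hR (hMB.1 hb) (hMB.1 hc)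
    (hMB.2.1 hb hc hbc) hUred P fun u hu =>
      have hX := isMaxCliqueIn_cliqueOf hR (hUred u hu)
      infinite_setOf_mem_maxClique_adj_iff hU hR hB hD hDt hX hMB (hpw _ hX) hb hc hbc _ _
  exact ⟨d, hMB.mem_of_adj hB hb hd hbd, hdU⟩

/-- in a basic piecewise ultrahomogeneous CUH graph realizing `D` and `D̃`,
every finite set of red vertices is dominated by a vertex of every maximal blue clique. -/
theorem stmt_18 {V : Type} (G : SimpleGraph V) (red : V → Prop)
    (hG : IsBasicCUH G red)
    (hpw : ∀ MR MB : Set V, IsMaxCliqueIn G {v | red v} MR →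
      IsMaxCliqueIn G {v | ¬ red v} MB →
      Ultrahomogeneous (G.induce (MR ∪ MB)) (fun x => red x.1))
    (hD : Realizes G red Dgraph Dred) (hDt : Realizes G red Dtilde Dred) :
    ∀ U : Finset V, (∀ v ∈ U, red v) →
      ∀ MB : Set V, IsMaxCliqueIn G {v | ¬ red v} MB →
        ∃ b ∈ MB, ∀ u ∈ U, G.Adj b u := by
  obtain ⟨⟨-, -, hU, hR, hB⟩, -⟩ := hG
  intro U hUred MB hMB
  simpa only [iff_true] using stmt_18_general G red hU hR hB hD hDt MB hMB
    (fun MR hMR => hpw MR MB hMR hMB) U hUred fun _ => True
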